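/- Let d ≥ 3. If (a,w,b) ∈ 𝒯 and f(a,w,b) = (a′,w′,b′), then (b, w̄, a) ∈ 𝒯 and f(b, w̄, a) = (b′, w̄′, a′), where x̄ denotes the reversal of the word x. -/

import Mathlib

namespace RichRT

variable {A : Type*}

/-- The word `w` occurs in the sequence `u` at position `j`. -/
def OccursAt (w : List A) (u : ℕ → A) (j : ℕ) : Prop :=
  w = (List.range w.length).map fun t => u (j + t)

/-- `w` is a factor of the infinite sequence `u`. -/
def IsFactorS (w : List A) (u : ℕ → A) : Prop :=
  ∃ j : ℕ, OccursAt w u j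

/-- `u` is recurrent: every factor occurs infinitely often. -/
def Recurrent (u : ℕ → A) : Prop :=
  ∀ w : List A, IsFactorS w u → ∀ N : ℕ, ∃ j, N ≤ j ∧ OccursAt w u j

/-- The number of distinct palindromic factors of a finite word. -/
noncomputable def palCount (w : List A) : ℕ :=
  Set.ncard {p : List A | p <:+: w ∧ p.reverse = p}

/-- A finite word of length `n` is rich if it has exactly `n+1` palindromic factors. -/
def RichWord (w : List A) : Prop := palCount w = w.length + 1

/-- A sequence is rich if all its factors are rich. -/
def RichSeq (u : ℕ → A) : Prop := ∀ w : List A, IsFactorS w u → RichWord w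

/-- The prefix of length `k` of the periodic sequence `vvv⋯`. -/
def powPref (v : List A) (k : ℕ) : List A := ((List.replicate k v).flatten).take k

/-- The set of exponents `k/|v|` of fractional powers `v^(k/|v|)` occurring in `u`,
with `|v| ≥ n`. -/
def expSet (u : ℕ → A) (n : ℕ) : Set ℝ :=
  {x | ∃ (v : List A) (k : ℕ), v ≠ [] ∧ n ≤ v.length ∧
    IsFactorS (powPref v k) u ∧ x = (k : ℝ) / (v.length : ℝ)}

/-- The critical exponent of a sequence, with values in `EReal`. -/
noncomputable def critExp (u : ℕ → A) : EReal :=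
  sSup ((fun x : ℝ => (x : EReal)) '' expSet u 0)

/-- The asymptotic critical exponent of a sequence: `⊤` if the critical exponent is `⊤`,
otherwise the limit (= infimum, by monotonicity) over `n` of the suprema of exponents of
powers `v^e` with `|v| ≥ n`. -/
noncomputable def acritExp (u : ℕ → A) : EReal :=
  if critExp u = ⊤ then ⊤
  else ⨅ n : ℕ, sSup ((fun x : ℝ => (x : EReal)) '' expSet u n)

/-- The morphism `φ_d` on letters: `i ↦ 0(i+1)` for `i < d-1`, `d-1 ↦ 0(d-1)(d-1)`. -/
def phiL (d : ℕ) (i : ℕ) : List ℕ :=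
  if i < d - 1 then [0, i + 1] else [0, d - 1, d - 1]

/-- The morphism `φ_d` on words. -/
def phiW (d : ℕ) (w : List ℕ) : List ℕ := w.flatMap (phiL d)

/-- `u` is the fixed point of `φ_d`: it begins with `0` and `φ_d(u) = u`, i.e. the image
of every prefix of `u` is again a prefix of `u`. -/
def IsPhiFixed (d : ℕ) (u : ℕ → ℕ) : Prop :=
  u 0 = 0 ∧ ∀ m : ℕ, OccursAt (phiW d ((List.range m).map u)) u 0

/-- Left extensions of `w` in `u`. -/
def Lext (u : ℕ → ℕ) (w : List ℕ) : Set (List ℕ) :=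
  {x | ∃ i : ℕ, x = i :: w ∧ IsFactorS x u}

/-- Right extensions of `w` in `u`. -/
def Rext (u : ℕ → ℕ) (w : List ℕ) : Set (List ℕ) :=
  {x | ∃ i : ℕ, x = w ++ [i] ∧ IsFactorS x u}

/-- Both-sided extensions of `w` in `u`. -/
def Bext (u : ℕ → ℕ) (w : List ℕ) : Set (List ℕ) :=
  {x | ∃ i j : ℕ, x = i :: (w ++ [j]) ∧ IsFactorS x u}

/-- `w` is a bispecial factor of `u`. -/
def Bispecial (u : ℕ → ℕ) (w : List ℕ) : Prop :=
  IsFactorS w u ∧ 2 ≤ (Lext u w).ncard ∧ 2 ≤ (Rext u w).ncard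

/-- The bilateral order `b(w) = #Bext(w) − #Lext(w) − #Rext(w) + 1`. -/
noncomputable def bord (u : ℕ → ℕ) (w : List ℕ) : ℤ :=
  ((Bext u w).ncard : ℤ) - ((Lext u w).ncard : ℤ) - ((Rext u w).ncard : ℤ) + 1

/-- The palindromes `F_0 = ε`, `F_i = φ(F_{i-1})0`. -/
def Fword (d : ℕ) : ℕ → List ℕ
  | 0 => []
  | i + 1 => phiW d (Fword d i) ++ [0]

/-- Membership in the set `𝒯` of bispecial triplets. -/
def TripleMem (d : ℕ) (u : ℕ → ℕ) (t : ℕ × List ℕ × ℕ) : Prop :=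
  Bispecial u t.2.1 ∧ t.1 < d - 1 ∧ t.2.2 < d - 1 ∧
    IsFactorS (t.1 :: t.2.1) u ∧ IsFactorS (t.2.1 ++ [t.2.2]) u

/-- The map `f` on triplets. -/
def fmap (d : ℕ) (t : ℕ × List ℕ × ℕ) : ℕ × List ℕ × ℕ :=
  ((t.1 + 1) % (d - 1),
   (if t.1 = d - 2 then [d - 1] else []) ++ phiW d t.2.1 ++ [0] ++
     (if t.2.2 = d - 2 then [d - 1] else []),
   (t.2.2 + 1) % (d - 1))

/-- The initial triplets `T_k = (0, ε, k)` for `k ≤ d-2` and `T_{d-1} = (0, d-1, 0)`. -/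
def Tinit (d k : ℕ) : ℕ × List ℕ × ℕ :=
  if k = d - 1 then (0, [d - 1], 0) else (0, ([] : List ℕ), k)

/-- The Parikh vector of a word. -/
def parikh (d : ℕ) (w : List ℕ) : Fin d → ℕ := fun i => w.count (i : ℕ)

/-- The incidence matrix of `φ_d`. -/
def Mmat (d : ℕ) : Matrix (Fin d) (Fin d) ℕ := fun i j => (phiL d (j : ℕ)).count (i : ℕ)

/-- `r` is a return word to `w` in `u`. -/
def ReturnWord (u : ℕ → ℕ) (w r : List ℕ) : Prop :=
  ∃ j ℓ : ℕ, j < ℓ ∧ OccursAt w u j ∧ OccursAt w u ℓ ∧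
    (∀ m, j < m → m < ℓ → ¬ OccursAt w u m) ∧
    r = (List.range (ℓ - j)).map fun t => u (j + t)

/-- `R` is a complete return word to `w` in `u`. -/
def CompleteReturn (u : ℕ → ℕ) (w R : List ℕ) : Prop :=
  ∃ r : List ℕ, ReturnWord u w r ∧ R = r ++ w

/-!
Since `φ(i)0` is a palindrome for every letter `i`, reversing `φ(w)0` gives `φ(w̄)0`. This is
already the equation for `f`, and it shows by induction that the words `F_i` are palindromes. As
`F_{i+1}` is a prefix of `φ(F_i x)` for every letter `x`, all the `F_i` are prefixes of `u`, so
every factor of `u` lies in a palindromic prefix and the language of `u` is closed under reversal.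
Reversal then exchanges left and right extensions.
-/

section Occurrences

variable {u : ℕ → A} {v w p : List A} {j k : ℕ}

theorem occursAt_append :
    OccursAt (v ++ w) u j ↔ OccursAt v u j ∧ OccursAt w u (j + v.length) := by
  simp only [OccursAt, List.length_append, List.range_add, List.map_append, List.map_map,
    Function.comp_def, ← Nat.add_assoc]
  exact ⟨fun h => List.append_inj h (by simp), fun h => congrArg₂ _ h.1 h.2⟩

theorem OccursAt.append_next (h : OccursAt v u j) : OccursAt (v ++ [u (j + v.length)]) u j :=
  occursAt_append.mpr ⟨h, by simp [OccursAt]⟩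

theorem OccursAt.eq_of_length_eq (hv : OccursAt v u j) (hw : OccursAt w u j)
    (hlen : v.length = w.length) : v = w := by
  rw [OccursAt] at hv hw
  rw [hv, hw, hlen]

theorem OccursAt.infix_of_add_length_le (hp : OccursAt p u j) (hw : OccursAt w u (j + k))
    (hle : k + w.length ≤ p.length) : w <:+: p := by
  have hsplit : p = p.take k ++ ((p.drop k).take w.length ++ (p.drop k).drop w.length) := by
    rw [List.take_append_drop, List.take_append_drop]
  rw [hsplit, occursAt_append, occursAt_append, List.length_take_of_le (by lia)] at hp
  have hwindow : (p.drop k).take w.length = w := hp.2.1.eq_of_length_eq hw (by simp; lia)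
  rw [← hwindow]
  exact (List.take_prefix _ _).isInfix.trans (List.drop_suffix _ _).isInfix

theorem IsFactorS.of_infix (hp : IsFactorS p u) (hw : w <:+: p) : IsFactorS w u := by
  obtain ⟨j, hj⟩ := hp
  obtain ⟨s, t, rfl⟩ := hw
  exact ⟨j + s.length, (occursAt_append.mp (occursAt_append.mp hj).1).2⟩

end Occurrences

section Reversal

/-- The set of factors of `u` is closed under reversal, so that `w ↦ w̄` is a symmetry of
extensions and bispecial factors. -/
def ReversalClosed (u : ℕ → A) : Prop :=
  ∀ w : List A, IsFactorS w u → IsFactorS w.reverse u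

theorem reversalClosed_of_palindromic_prefixes {u : ℕ → A}
    (h : ∀ n, ∃ p : List A, n ≤ p.length ∧ p.Palindrome ∧ OccursAt p u 0) :
    ReversalClosed u := by
  rintro w ⟨j, hw⟩
  obtain ⟨p, hlen, hpal, hp⟩ := h (j + w.length)
  have hwp : w <:+: p := hp.infix_of_add_length_le (by rwa [Nat.zero_add]) hlen
  have hrev : w.reverse <:+: p := hpal.reverse_eq ▸ List.reverse_infix.mpr hwp
  exact IsFactorS.of_infix ⟨0, hp⟩ hrev

theorem ReversalClosed.isFactorS_reverse_iff {u : ℕ → A} (hu : ReversalClosed u) {w : List A} :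
    IsFactorS w.reverse u ↔ IsFactorS w u :=
  ⟨fun h => w.reverse_reverse ▸ hu _ h, hu w⟩

variable {u : ℕ → ℕ} (hu : ReversalClosed u) (w : List ℕ)
include hu

theorem ReversalClosed.lext_reverse : Lext u w.reverse = List.reverse '' Rext u w := by
  ext x
  constructor
  · rintro ⟨i, rfl, h⟩
    exact ⟨w ++ [i], ⟨i, rfl, hu.isFactorS_reverse_iff.mp (by simpa using h)⟩, by simp⟩
  · rintro ⟨_, ⟨i, rfl, h⟩, rfl⟩
    exact ⟨i, by simp, hu _ h⟩

theorem ReversalClosed.rext_reverse : Rext u w.reverse = List.reverse '' Lext u w := by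
  rw [← w.reverse_reverse, hu.lext_reverse, w.reverse_reverse,
    ← Set.image_comp, List.reverse_involutive.comp_self, Set.image_id]

theorem ReversalClosed.bispecial_reverse_iff : Bispecial u w.reverse ↔ Bispecial u w := by
  rw [Bispecial, Bispecial, hu.isFactorS_reverse_iff, hu.lext_reverse, hu.rext_reverse,
    Set.ncard_image_of_injective _ List.reverse_injective,
    Set.ncard_image_of_injective _ List.reverse_injective, and_comm (a := 2 ≤ (Rext u w).ncard)]

theorem ReversalClosed.tripleMem_reverse_iff (d a b : ℕ) :
    TripleMem d u (b, w.reverse, a) ↔ TripleMem d u (a, w, b) := by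
  have hleft : IsFactorS (b :: w.reverse) u ↔ IsFactorS (w ++ [b]) u := by
    rw [← hu.isFactorS_reverse_iff, List.reverse_cons, List.reverse_reverse]
  have hright : IsFactorS (w.reverse ++ [a]) u ↔ IsFactorS (a :: w) u := by
    rw [← List.reverse_cons, hu.isFactorS_reverse_iff]
  simp only [TripleMem, hu.bispecial_reverse_iff, hleft, hright]
  tauto

end Reversal

section Morphism

variable (d : ℕ)

theorem phiW_append (v w : List ℕ) : phiW d (v ++ w) = phiW d v ++ phiW d w :=
  List.flatMap_append

theorem phiW_singleton (i : ℕ) : phiW d [i] = phiL d i :=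
  List.flatMap_singleton _ _

theorem phiL_eq_cons_zero (i : ℕ) : ∃ t, phiL d i = 0 :: t := by
  unfold phiL
  split_ifs <;> exact ⟨_, rfl⟩

theorem reverse_phiL_append_zero (i : ℕ) : (phiL d i ++ [0]).reverse = phiL d i ++ [0] := by
  unfold phiL
  split_ifs <;> rfl

theorem reverse_phiW_append_zero (w : List ℕ) :
    (phiW d w ++ [0]).reverse = phiW d w.reverse ++ [0] := by
  induction w with
  | nil => rfl
  | cons i w ih =>
    calc (phiW d (i :: w) ++ [0]).reverse
        = (phiW d w ++ [0]).reverse ++ (phiL d i).reverse := by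
          simp only [phiW, List.flatMap_cons, List.append_assoc, List.reverse_append]
      _ = phiW d w.reverse ++ (phiL d i ++ [0]).reverse := by
          rw [ih, List.append_assoc, List.reverse_append, List.reverse_singleton]
      _ = phiW d (i :: w).reverse ++ [0] := by
          rw [reverse_phiL_append_zero, List.reverse_cons, phiW_append, phiW_singleton,
            List.append_assoc]

theorem length_le_length_phiW (w : List ℕ) : w.length ≤ (phiW d w).length := by
  induction w with
  | nil => exact Nat.zero_le _
  | cons i w ih =>
    obtain ⟨t, ht⟩ := phiL_eq_cons_zero d i
    simp only [phiW, List.flatMap_cons, ht, List.length_append, List.length_cons] at ih ⊢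
    lia

theorem palindrome_fword (n : ℕ) : (Fword d n).Palindrome := by
  refine List.Palindrome.of_reverse_eq ?_
  induction n with
  | zero => rfl
  | succ n ih => rw [Fword, reverse_phiW_append_zero, ih]

theorem le_length_fword (n : ℕ) : n ≤ (Fword d n).length := by
  induction n with
  | zero => exact Nat.zero_le _
  | succ n ih =>
    rw [Fword, List.length_append, List.length_singleton]
    exact Nat.succ_le_succ (ih.trans (length_le_length_phiW d _))

theorem fmap_reverse (a b : ℕ) (w : List ℕ) :
    fmap d (b, w.reverse, a) =
      ((fmap d (a, w, b)).2.2, (fmap d (a, w, b)).2.1.reverse, (fmap d (a, w, b)).1) := by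
  have reverse_border (c : ℕ) :
      (if c = d - 2 then [d - 1] else []).reverse = if c = d - 2 then [d - 1] else [] := by
    split_ifs <;> rfl
  simp only [fmap, List.append_assoc _ (phiW d _) [0], ← reverse_phiW_append_zero]
  generalize phiW d w ++ [0] = v
  simp only [List.reverse_append, reverse_border, List.append_assoc]

end Morphism

section FixedPoint

variable {d : ℕ} {u : ℕ → ℕ} (hu : IsPhiFixed d u)
include hu

theorem IsPhiFixed.occursAt_phiW {v : List ℕ} (hv : OccursAt v u 0) :
    OccursAt (phiW d v) u 0 := by
  have hprefix : v = (List.range v.length).map u := by simpa only [OccursAt, Nat.zero_add] using hv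
  rw [hprefix]
  exact hu.2 v.length

theorem IsPhiFixed.occursAt_phiW_append_zero {v : List ℕ} (hv : OccursAt v u 0) :
    OccursAt (phiW d v ++ [0]) u 0 := by
  have hnext := hu.occursAt_phiW hv.append_next
  obtain ⟨t, ht⟩ := phiL_eq_cons_zero d (u (0 + v.length))
  rw [phiW_append, phiW_singleton, ht, List.append_cons] at hnext
  exact (occursAt_append.mp hnext).1

theorem IsPhiFixed.occursAt_fword (n : ℕ) : OccursAt (Fword d n) u 0 := by
  induction n with
  | zero => rfl
  | succ n ih => exact hu.occursAt_phiW_append_zero ih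

theorem IsPhiFixed.reversalClosed : ReversalClosed u :=
  reversalClosed_of_palindromic_prefixes fun n =>
    ⟨Fword d n, le_length_fword d n, palindrome_fword d n, hu.occursAt_fword n⟩

end FixedPoint

theorem statement9_general (d : ℕ) (u : ℕ → ℕ) (hu : IsPhiFixed d u)
    (a b : ℕ) (w : List ℕ) :
    (TripleMem d u (b, w.reverse, a) ↔ TripleMem d u (a, w, b)) ∧
    fmap d (b, w.reverse, a) =
      ((fmap d (a, w, b)).2.2, (fmap d (a, w, b)).2.1.reverse, (fmap d (a, w, b)).1) :=
  ⟨hu.reversalClosed.tripleMem_reverse_iff w d a b, fmap_reverse d a b w⟩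

/-- Let `d ≥ 3`. If `(a,w,b) ∈ 𝒯` and `f(a,w,b) = (a′,w′,b′)`, then
`(b, w̄, a) ∈ 𝒯` and `f(b, w̄, a) = (b′, w̄′, a′)`, where `x̄` is the reversal of `x`. -/
theorem statement9 (d : ℕ) (hd : 3 ≤ d) (u : ℕ → ℕ) (hu : IsPhiFixed d u)
    (a b : ℕ) (w : List ℕ) (ht : TripleMem d u (a, w, b)) :
    TripleMem d u (b, w.reverse, a) ∧
    fmap d (b, w.reverse, a) =
      ((fmap d (a, w, b)).2.2, (fmap d (a, w, b)).2.1.reverse, (fmap d (a, w, b)).1) := by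
  obtain ⟨hmem, hfmap⟩ := statement9_general d u hu a b w
  exact ⟨hmem.mpr ht, hfmap⟩

end RichRT
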